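/- arXiv:2404.15448 — 2 statements merged into one kernel-verified Lean document; each statement's English description precedes it below -/
import Mathlib

section
/- Let μ be a translation bounded complex measure on ℝ^d whose distributional Fourier transform μ̂ is a pure point measure. Then μ is an almost periodic measure: for every continuous compactly supported ψ : ℝ^d → ℂ, the convolution (μ⋆ψ)(t) = ∫ ψ(t−x) dμ(x) is a Bohr almost periodic function of t. -/
open MeasureTheory Metric Filter Topology Complex SchwartzMap
open scoped RealInnerProductSpace ENNReal

noncomputable section

/-- A continuous function `g` is *Bohr almost periodic* if for every `ε > 0` its set of
`ε`-almost periods is relatively dense. -/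
def IsBohrAP {V : Type*} [SeminormedAddCommGroup V] (g : V → ℂ) : Prop :=
  Continuous g ∧ ∀ ε : ℝ, 0 < ε → ∃ L : ℝ, 0 < L ∧ ∀ x : V, ∃ τ : V,
    dist τ x < L ∧ ∀ y : V, ‖g (y + τ) - g y‖ < ε

/-- A (locally finite) complex measure on `V`, given by its polar decomposition: the total
variation measure `var` together with a unimodular density `den`, so that
`μ(A) = ∫_A den d(var)`. -/
structure CMeas (V : Type*) [MeasurableSpace V] where
  var : Measure V
  den : V → ℂ
  norm_den : ∀ x, ‖den x‖ = 1
  measurable_den : Measurable den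

namespace CMeas

variable {V : Type*} [MeasurableSpace V]

/-- Pairing of a complex measure with a test function: `∫ f dμ = ∫ f·den d(var)`. -/
def pair (μ : CMeas V) (f : V → ℂ) : ℂ := ∫ x, f x * μ.den x ∂μ.var

/-- Local finiteness: finite total variation on compact sets. -/
def locFinite [TopologicalSpace V] (μ : CMeas V) : Prop :=
  ∀ K : Set V, IsCompact K → μ.var K < ⊤

end CMeas

/-- Euclidean space `ℝ^d`. -/
abbrev Ed (d : ℕ) := EuclideanSpace ℝ (Fin d)

variable {d : ℕ}

/-- The complex measure is a temperate measure: every Schwartz function is integrable with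
respect to its total variation. -/
def CMeas.temperate (μ : CMeas (Ed d)) : Prop :=
  ∀ φ : SchwartzMap (Ed d) ℂ, Integrable (fun x => φ x * μ.den x) μ.var

/-- A pure point complex measure on `V`, described by its (countably supported) mass function. -/
structure PPM (V : Type*) where
  mass : V → ℂ
  countable : (Function.support mass).Countable

/-- The total variation of a pure point measure, evaluated on a set. -/
def PPM.var {V : Type*} (μ : PPM V) (A : Set V) : ℝ≥0∞ :=
  ∑' x : A, (‖μ.mass x‖₊ : ℝ≥0∞)

/-- Pairing of a pure point measure with a test function. -/
def PPM.pair {V : Type*} (μ : PPM V) (φ : V → ℂ) : ℂ := ∑' x, μ.mass x * φ x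

/-- Local finiteness of a pure point measure. -/
def PPM.locFinite (μ : PPM (Ed d)) : Prop := ∀ r : ℝ, μ.var (ball 0 r) < ⊤

/-!
Since `μ` is translation bounded, `g = μ ⋆ ψ` is bounded and uniformly continuous. Let `φ` be
smooth and compactly supported with `φ 0 = 1`, and put `k_c = 𝓕⁻ (φ(c ·))`. As `𝓕⁻ φ` has integral
`φ 0 = 1`, the functions `k_c ⋆ g` converge to `g` uniformly as `c → 0`. On the other hand
`k_c ⋆ (μ ⋆ ψ) = ψ ⋆ (μ ⋆ k_c)`, and `μ ⋆ k_c` is the trigonometric series with coefficients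
`ν{y} φ(c y)`, where `ν` is the Fourier transform of `μ`. This series is absolutely convergent,
hence so is the one with coefficients `ν{y} φ(c y) 𝓕ψ(y)` representing `k_c ⋆ g`. So `g` is a
uniform limit of trigonometric polynomials.
-/

open scoped FourierTransform

section AlmostPeriodic

variable {V : Type*} [SeminormedAddCommGroup V]

theorem isBohrAP_of_tendstoUniformly {ι : Type*} {l : Filter ι} {F : ι → V → ℂ} {g : V → ℂ}
    (hF : TendstoUniformly F g l) (hap : ∃ᶠ i in l, IsBohrAP (F i)) : IsBohrAP g := by
  refine ⟨hF.continuous (hap.mono fun _ h => h.1), fun ε hε => ?_⟩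
  obtain ⟨i, hi, happrox⟩ :=
    (hap.and_eventually (Metric.tendstoUniformly_iff.1 hF (ε / 3) (by positivity))).exists
  obtain ⟨L, hL, hperiod⟩ := hi.2 (ε / 3) (by positivity)
  refine ⟨L, hL, fun x => (hperiod x).imp fun τ hτ => ⟨hτ.1, fun y => ?_⟩⟩
  have hFi : dist (F i (y + τ)) (F i y) < ε / 3 := by simpa [dist_eq_norm] using hτ.2 y
  rw [← dist_eq_norm]
  calc dist (g (y + τ)) (g y)
      ≤ dist (g (y + τ)) (F i (y + τ)) + dist (F i (y + τ)) (F i y) + dist (F i y) (g y) :=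
        dist_triangle4 _ _ _ _
    _ < ε / 3 + ε / 3 + ε / 3 := by
        gcongr
        · exact happrox _
        · rw [dist_comm]; exact happrox _
    _ = ε := by ring

-- Two points whose character values are close differ by an almost period, and finitely many points
-- suffice to approximate all character values because the torus `ι → Circle` is compact.
theorem exists_relDense_norm_addChar_sub_one_lt {ι : Type*} [Finite ι] (χ : ι → AddChar V Circle)
    {δ : ℝ} (hδ : 0 < δ) :
    ∃ L : ℝ, 0 < L ∧ ∀ x : V, ∃ τ : V, dist τ x < L ∧ ∀ i, ‖(χ i τ : ℂ) - 1‖ < δ := by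
  have := Fintype.ofFinite ι
  let f : V → ι → Circle := fun x i => χ i x
  obtain ⟨s, hs, hcover⟩ : ∃ s : Set V, s.Finite ∧ Set.range f ⊆ ⋃ z ∈ s, ball (f z) δ := by
    obtain ⟨t, ht, hfin, hcover⟩ := Metric.finite_approx_of_totallyBounded
      (isCompact_univ.totallyBounded.subset (Set.subset_univ (f '' Set.univ))) δ hδ
    obtain ⟨s, -, hs, hcover⟩ := Set.exists_subset_image_finite_and
      (p := fun t => f '' Set.univ ⊆ ⋃ y ∈ t, ball y δ) |>.1 ⟨t, ht, hfin, hcover⟩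
    exact ⟨s, hs, by simpa only [Set.image_univ, Set.biUnion_image] using hcover⟩
  obtain ⟨L, hL, hsL⟩ := hs.isBounded.exists_pos_norm_lt
  refine ⟨L, hL, fun x => ?_⟩
  obtain ⟨z, hz, hxz⟩ := Set.mem_iUnion₂.1 (hcover ⟨x, rfl⟩)
  refine ⟨x - z, by simpa [dist_eq_norm] using hsL z hz, fun i => ?_⟩
  calc ‖(χ i (x - z) : ℂ) - 1‖ = ‖(χ i x : ℂ) - χ i z‖ := by
        rw [AddChar.map_sub_eq_div, Circle.coe_div, div_sub_one (Circle.coe_ne_zero _), norm_div,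
          Circle.norm_coe, div_one]
    _ = dist (f x i) (f z i) := (dist_eq_norm _ _).symm
    _ ≤ dist (f x) (f z) := dist_le_pi_dist (f x) (f z) i
    _ < δ := hxz

theorem isBohrAP_sum_addChar {ι : Type*} (s : Finset ι) (a : ι → ℂ) {χ : ι → AddChar V Circle}
    (hχ : ∀ i, Continuous (χ i)) : IsBohrAP fun t => ∑ i ∈ s, a i * χ i t := by
  refine ⟨by fun_prop, fun ε hε => ?_⟩
  set A := ∑ i ∈ s, ‖a i‖
  have : 0 ≤ A := Finset.sum_nonneg fun _ _ => norm_nonneg _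
  obtain ⟨L, hL, hperiod⟩ :=
    exists_relDense_norm_addChar_sub_one_lt (fun i : s => χ i) (δ := ε / (A + 1)) (by positivity)
  refine ⟨L, hL, fun x => (hperiod x).imp fun τ hτ => ⟨hτ.1, fun y => ?_⟩⟩
  have hterm (i : ι) : a i * χ i (y + τ) - a i * χ i y = a i * χ i y * (χ i τ - 1) := by
    rw [AddChar.map_add_eq_mul, Circle.coe_mul]; ring
  calc ‖∑ i ∈ s, a i * χ i (y + τ) - ∑ i ∈ s, a i * χ i y‖
      = ‖∑ i ∈ s, a i * χ i y * (χ i τ - 1)‖ := by simp only [← Finset.sum_sub_distrib, hterm]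
    _ ≤ ∑ i ∈ s, ‖a i‖ * (ε / (A + 1)) := norm_sum_le_of_le s fun i hi => by
        rw [norm_mul, norm_mul, Circle.norm_coe, mul_one]
        gcongr
        exact (hτ.2 ⟨i, hi⟩).le
    _ = A / (A + 1) * ε := by rw [← Finset.sum_mul]; ring
    _ < ε := mul_lt_of_lt_one_left hε ((div_lt_one (by positivity)).2 (lt_add_one A))

theorem isBohrAP_tsum_addChar {ι : Type*} {a : ι → ℂ} (ha : Summable fun i => ‖a i‖)
    {χ : ι → AddChar V Circle} (hχ : ∀ i, Continuous (χ i)) :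
    IsBohrAP fun t => ∑' i, a i * χ i t :=
  isBohrAP_of_tendstoUniformly (tendstoUniformly_tsum ha fun i t => by
    rw [norm_mul, Circle.norm_coe, mul_one])
    (Frequently.of_forall fun s => isBohrAP_sum_addChar s a hχ)

end AlmostPeriodic

section ApproximateIdentity

variable {V E : Type*} [NormedAddCommGroup V] [NormedSpace ℝ V] [MeasurableSpace V]
  [OpensMeasurableSpace V] [SecondCountableTopology V]
  {𝕜 : Type*} [RCLike 𝕜] [NormedAddCommGroup E] [NormedSpace ℝ E] [NormedSpace 𝕜 E]
  [CompleteSpace E]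

theorem tendstoUniformly_integral_smul_comp_sub_smul {m : Measure V} {k : V → 𝕜} {g : V → E} {B : ℝ}
    (hk : Integrable k m) (hg : UniformContinuous g) (hB : ∀ t, ‖g t‖ ≤ B) :
    TendstoUniformly (fun (c : ℝ) t => ∫ s, k s • g (t - c • s) ∂m)
      (fun t => (∫ s, k s ∂m) • g t) (𝓝 0) := by
  have hmeas (c : ℝ) (t : V) : AEStronglyMeasurable (fun s => g (t - c • s)) m :=
    (hg.continuous.comp (by fun_prop)).aestronglyMeasurable
  have hint (c : ℝ) (t : V) : Integrable (fun s => k s • g (t - c • s)) m :=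
    hk.smul_bdd B (hmeas c t) (Eventually.of_forall fun s => hB _)
  have hdiff (p : ℝ × V) : (∫ s, k s • g (p.2 - p.1 • s) ∂m) - (∫ s, k s ∂m) • g p.2
      = ∫ s, k s • (g (p.2 - p.1 • s) - g p.2) ∂m := by
    simp only [smul_sub]
    rw [integral_sub (hint _ _) (hk.smul_const _), integral_smul_const]
  have hpointwise (s : V) : Tendsto (fun p : ℝ × V => k s • (g (p.2 - p.1 • s) - g p.2))
      (𝓝 0 ×ˢ ⊤) (𝓝 0) := by
    have hshift : Tendsto (fun p : ℝ × V => dist (p.2 - p.1 • s) p.2) (𝓝 0 ×ˢ ⊤) (𝓝 0) := by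
      simpa [dist_eq_norm, norm_smul] using (tendsto_fst.norm.mul_const ‖s‖ :
        Tendsto (fun p : ℝ × V => ‖p.1‖ * ‖s‖) (𝓝 0 ×ˢ ⊤) (𝓝 (‖(0 : ℝ)‖ * ‖s‖)))
    have hsub : Tendsto (fun p : ℝ × V => g (p.2 - p.1 • s) - g p.2) (𝓝 0 ×ˢ ⊤) (𝓝 0) :=
      tendsto_zero_iff_norm_tendsto_zero.2 <| by
        simpa only [Function.comp_def, dist_eq_norm] using
          tendsto_uniformity_iff_dist_tendsto_zero.1
            (Tendsto.comp hg (tendsto_uniformity_iff_dist_tendsto_zero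
              (f := fun p : ℝ × V => (p.2 - p.1 • s, p.2)).2 hshift))
    simpa using hsub.const_smul (k s)
  have hbound (p : ℝ × V) (s : V) : ‖k s • (g (p.2 - p.1 • s) - g p.2)‖ ≤ ‖k s‖ * (2 * B) := by
    rw [norm_smul, two_mul]
    gcongr
    exact norm_sub_le_of_le (hB _) (hB _)
  have hlim : Tendsto (fun p : ℝ × V => ∫ s, k s • (g (p.2 - p.1 • s) - g p.2) ∂m)
      (𝓝 0 ×ˢ ⊤) (𝓝 0) := by
    rw [← integral_zero V E (μ := m)]
    exact tendsto_integral_filter_of_dominated_convergence (fun s => ‖k s‖ * (2 * B))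
      (Eventually.of_forall fun p => hk.1.smul ((hmeas _ _).sub aestronglyMeasurable_const))
      (Eventually.of_forall fun p => Eventually.of_forall (hbound p)) (hk.norm.mul_const _)
      (Eventually.of_forall hpointwise)
  rw [tendstoUniformly_iff_tendsto, tendsto_uniformity_iff_dist_tendsto_zero]
  simpa only [dist_eq_norm', hdiff, norm_zero] using hlim.norm

end ApproximateIdentity

namespace CMeas

section Convolution

variable {V : Type*} [MeasurableSpace V]

/-- The convolution `(μ ⋆ f)(t) = ∫ f (t - x) dμ(x)` of a complex measure with a function. -/
def conv [Sub V] (μ : CMeas V) (f : V → ℂ) (t : V) : ℂ := μ.pair fun x => f (t - x)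

variable (μ : CMeas V) {f g : V → ℂ}

theorem integrable_mul_den (hf : Integrable f μ.var) :
    Integrable (fun x => f x * μ.den x) μ.var :=
  hf.mul_bdd (c := 1) μ.measurable_den.aestronglyMeasurable
    (Eventually.of_forall fun x => (μ.norm_den x).le)

theorem norm_conv_le_integral_norm [Sub V] (t : V) :
    ‖μ.conv f t‖ ≤ ∫ x, ‖f (t - x)‖ ∂μ.var :=
  (norm_integral_le_integral_norm _).trans_eq <| by simp only [norm_mul, μ.norm_den, mul_one]

theorem conv_sub [Sub V] {t : V} (hf : Integrable (fun x => f (t - x)) μ.var)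
    (hg : Integrable (fun x => g (t - x)) μ.var) :
    μ.conv (fun x => f x - g x) t = μ.conv f t - μ.conv g t := by
  simp only [conv, pair, sub_mul]
  exact integral_sub (μ.integrable_mul_den hf) (μ.integrable_mul_den hg)

variable [AddCommGroup V] [MeasurableAdd₂ V] [MeasurableNeg V] [SFinite μ.var] {m : Measure V}
  [SFinite m]

theorem integrable_prod_mul_comp_sub {k ψ : V → ℂ} {M : ℝ} (hk : Integrable k m) (hψ : Measurable ψ)
    (hint : ∀ t, Integrable (fun x => ψ (t - x)) μ.var)
    (hM : ∀ t, ∫ x, ‖ψ (t - x)‖ ∂μ.var ≤ M) (t : V) :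
    Integrable (fun p : V × V => k p.2 * ψ (t - p.2 - p.1) * μ.den p.1) (μ.var.prod m) := by
  have hprod : Integrable (fun p : V × V => k p.2 * ψ (t - p.2 - p.1)) (μ.var.prod m) := by
    have hmeas : AEStronglyMeasurable (fun p : V × V => k p.2 * ψ (t - p.2 - p.1))
        (μ.var.prod m) :=
      hk.1.comp_snd.mul (hψ.comp (by fun_prop)).aestronglyMeasurable
    refine (integrable_prod_iff' hmeas).2
      ⟨Eventually.of_forall fun s => (hint (t - s)).const_mul (k s), ?_⟩
    refine (hk.norm.mul_const M).mono' hmeas.norm.prod_swap.integral_prod_right'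
      (Eventually.of_forall fun s => ?_)
    simp only [norm_mul, integral_const_mul, norm_norm,
      Real.norm_of_nonneg (integral_nonneg fun _ => norm_nonneg _)]
    exact mul_le_mul_of_nonneg_left (hM _) (norm_nonneg _)
  exact hprod.mul_bdd (c := 1) (μ.measurable_den.comp measurable_fst).aestronglyMeasurable
    (Eventually.of_forall fun p => (μ.norm_den p.1).le)

-- Both sides equal `(μ ⋆ (k ⋆ ψ))(t)`, by Fubini and the substitution `s = t - x - u`.
theorem integral_mul_conv_comm [m.IsAddLeftInvariant] [m.IsNegInvariant] {k ψ : V → ℂ} {t : V}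
    (hint : Integrable (fun p : V × V => k p.2 * ψ (t - p.2 - p.1) * μ.den p.1)
      (μ.var.prod m)) :
    ∫ s, k s * μ.conv ψ (t - s) ∂m = ∫ u, ψ u * μ.conv k (t - u) ∂m := by
  have hψarg (x u : V) : t - (t - x - u) - x = u := by abel
  have hkarg (x u : V) : t - x - u = t - u - x := by abel
  have hsubst : MeasurePreserving (fun p : V × V => (p.1, t - p.1 - p.2)) (μ.var.prod m)
      (μ.var.prod m) :=
    (MeasurePreserving.id _).skew_product (g := fun x u => t - x - u) (by fun_prop)
      (Eventually.of_forall fun x => (Measure.measurePreserving_sub_left m (t - x)).map_eq)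
  have hint' : Integrable (fun p : V × V => ψ p.2 * k (t - p.2 - p.1) * μ.den p.1)
      (μ.var.prod m) := by
    refine (hsubst.integrable_comp_of_integrable hint).congr (Eventually.of_forall fun p => ?_)
    simp only [Function.comp_apply, hψarg]
    rw [hkarg]
    ring
  calc ∫ s, k s * μ.conv ψ (t - s) ∂m
      = ∫ s, ∫ x, k s * ψ (t - s - x) * μ.den x ∂μ.var ∂m := by
        simp only [conv, pair, mul_assoc, integral_const_mul]
    _ = ∫ x, ∫ s, k s * ψ (t - s - x) * μ.den x ∂m ∂μ.var := (integral_integral_swap hint).symm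
    _ = ∫ x, ∫ u, ψ u * k (t - u - x) * μ.den x ∂m ∂μ.var := by
        congr 1 with x
        rw [← integral_sub_left_eq_self _ m (t - x)]
        simp only [hψarg, hkarg, mul_comm (k _)]
    _ = ∫ u, ∫ x, ψ u * k (t - u - x) * μ.den x ∂μ.var ∂m := integral_integral_swap hint'
    _ = ∫ u, ψ u * μ.conv k (t - u) ∂m := by
        simp only [conv, pair, mul_assoc, integral_const_mul]

end Convolution

section TranslationBounded

variable {V : Type*} [NormedAddCommGroup V] [MeasurableSpace V] {μ : CMeas V}

/-- A complex measure is *translation bounded* if the total variation of unit balls is bounded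
uniformly in the centre. -/
def IsTranslationBounded (μ : CMeas V) : Prop :=
  ∃ C : ℝ, ∀ x, μ.var (ball x 1) ≤ ENNReal.ofReal C

theorem IsTranslationBounded.isLocallyFiniteMeasure (hμ : μ.IsTranslationBounded) :
    IsLocallyFiniteMeasure μ.var := by
  obtain ⟨C, hC⟩ := hμ
  exact ⟨fun x => ⟨ball x 1, ball_mem_nhds x one_pos, (hC x).trans_lt ENNReal.ofReal_lt_top⟩⟩

variable [ProperSpace V]

theorem IsTranslationBounded.exists_var_ball_le (hμ : μ.IsTranslationBounded) (R : ℝ) :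
    ∃ M : NNReal, ∀ t, μ.var (ball t R) ≤ M := by
  obtain ⟨C, hC⟩ := hμ
  obtain ⟨u, -, hu, hcover⟩ := Metric.finite_approx_of_totallyBounded
    (isCompact_closedBall (0 : V) R).totallyBounded 1 one_pos
  lift u to Finset V using hu
  refine ⟨u.card * C.toNNReal, fun t => ?_⟩
  have hsub : ball t R ⊆ ⋃ c ∈ u, ball (t + c) 1 := by
    intro x hx
    obtain ⟨c, hc, hxc⟩ := Set.mem_iUnion₂.1 <| hcover (a := x - t) <| by
      simpa [dist_eq_norm] using (mem_ball.1 hx).le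
    exact Set.mem_iUnion₂.2 ⟨c, hc, by simpa [dist_eq_norm, sub_sub] using hxc⟩
  calc μ.var (ball t R) ≤ μ.var (⋃ c ∈ u, ball (t + c) 1) := measure_mono hsub
    _ ≤ ∑ c ∈ u, μ.var (ball (t + c) 1) := measure_biUnion_finset_le _ _
    _ ≤ ∑ _c ∈ u, ENNReal.ofReal C := Finset.sum_le_sum fun c _ => hC _
    _ = (u.card * C.toNNReal : NNReal) := by simp [ENNReal.ofReal]

theorem IsTranslationBounded.exists_integral_norm_comp_sub_le (hμ : μ.IsTranslationBounded)
    (R : ℝ) :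
    ∃ M : NNReal, ∀ (f : V → ℂ) (C : ℝ), (∀ x, ‖f x‖ ≤ C) → Function.support f ⊆ ball 0 R →
      ∀ t, ∫ x, ‖f (t - x)‖ ∂μ.var ≤ C * M := by
  obtain ⟨M, hM⟩ := hμ.exists_var_ball_le R
  refine ⟨M, fun f C hC hsupp t => ?_⟩
  have hC0 : 0 ≤ C := (norm_nonneg _).trans (hC 0)
  have hzero (x : V) (hx : x ∉ ball t R) : ‖f (t - x)‖ = 0 := by
    refine norm_eq_zero.2 (Function.notMem_support.1 fun h => hx ?_)
    simpa [dist_eq_norm, norm_sub_rev] using hsupp h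
  calc ∫ x, ‖f (t - x)‖ ∂μ.var = ∫ x in ball t R, ‖f (t - x)‖ ∂μ.var :=
        (setIntegral_eq_integral_of_forall_compl_eq_zero hzero).symm
    _ ≤ ‖∫ x in ball t R, ‖f (t - x)‖ ∂μ.var‖ := Real.le_norm_self _
    _ ≤ C * μ.var.real (ball t R) :=
        norm_setIntegral_le_of_norm_le_const ((hM t).trans_lt ENNReal.coe_lt_top)
          fun x _ => (norm_norm _).trans_le (hC _)
    _ ≤ C * M := by
        gcongr
        exact ENNReal.toReal_mono ENNReal.coe_ne_top (hM t)

variable {ψ : V → ℂ}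

theorem IsTranslationBounded.exists_integral_norm_comp_sub_le_of_hasCompactSupport
    (hμ : μ.IsTranslationBounded) (hψ : Continuous ψ) (hψc : HasCompactSupport ψ) :
    ∃ M : ℝ, ∀ t, ∫ x, ‖ψ (t - x)‖ ∂μ.var ≤ M := by
  obtain ⟨B, hB⟩ := hψc.exists_bound_of_continuous hψ
  obtain ⟨R, hR⟩ := hψc.isCompact.isBounded.subset_ball (0 : V)
  obtain ⟨M, hM⟩ := hμ.exists_integral_norm_comp_sub_le R
  exact ⟨B * M, hM ψ B hB ((subset_tsupport ψ).trans hR)⟩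

variable [BorelSpace V]

theorem IsTranslationBounded.integrable_comp_sub (hμ : μ.IsTranslationBounded) (hψ : Continuous ψ)
    (hψc : HasCompactSupport ψ) (t : V) : Integrable (fun x => ψ (t - x)) μ.var := by
  have := hμ.isLocallyFiniteMeasure
  exact (hψ.comp (continuous_sub_left t)).integrable_of_hasCompactSupport
    (hψc.comp_homeomorph (Homeomorph.subLeft t))

theorem IsTranslationBounded.uniformContinuous_conv (hμ : μ.IsTranslationBounded)
    (hψ : Continuous ψ) (hψc : HasCompactSupport ψ) : UniformContinuous (μ.conv ψ) := by
  obtain ⟨R, hR⟩ := hψc.isCompact.isBounded.subset_ball (0 : V)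
  obtain ⟨M, hM⟩ := hμ.exists_integral_norm_comp_sub_le (R + 1)
  refine Metric.uniformContinuous_iff.2 fun ε hε => ?_
  obtain ⟨δ, hδ, hψδ⟩ := Metric.uniformContinuous_iff.1
    (hψc.uniformContinuous_of_continuous hψ) (ε / (M + 1)) (by positivity)
  refine ⟨min δ 1, by positivity, fun a b hab => ?_⟩
  set h := b - a with hdef
  have hb (x : V) : b - x = a - x + h := by rw [hdef]; abel
  have hh : ‖h‖ < min δ 1 := by rwa [← dist_eq_norm']
  have hsupp : Function.support (fun x => ψ (x + h) - ψ x) ⊆ ball 0 (R + 1) := by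
    intro x hx
    rw [mem_ball_zero_iff]
    by_contra! hxR
    have hxh : R ≤ ‖x + h‖ := by
      linarith [norm_le_norm_add_norm_sub' x (x + h), hh.trans_le (min_le_right _ _),
        show ‖x - (x + h)‖ = ‖h‖ by simp]
    have hzero (y : V) (hy : R ≤ ‖y‖) : ψ y = 0 :=
      image_eq_zero_of_notMem_tsupport fun hmem => (mem_ball_zero_iff.1 (hR hmem)).not_ge hy
    exact hx (by simp only [hzero _ hxh, hzero x (by linarith), sub_zero])
  have hdiff : μ.conv ψ b - μ.conv ψ a = μ.conv (fun x => ψ (x + h) - ψ x) a := by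
    have hshift : μ.conv ψ b = μ.conv (fun x => ψ (x + h)) a := by
      simp only [conv, hb]
    rw [hshift, μ.conv_sub _ (hμ.integrable_comp_sub hψ hψc a)]
    simpa only [hb] using hμ.integrable_comp_sub hψ hψc b
  calc dist (μ.conv ψ a) (μ.conv ψ b) = ‖μ.conv (fun x => ψ (x + h) - ψ x) a‖ := by
        rw [dist_eq_norm', hdiff]
    _ ≤ ∫ x, ‖ψ (a - x + h) - ψ (a - x)‖ ∂μ.var := μ.norm_conv_le_integral_norm a
    _ ≤ ε / (M + 1) * M := hM _ _ (fun x => by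
        rw [← dist_eq_norm]
        exact (hψδ (by simpa using hh.trans_le (min_le_left _ _))).le) hsupp a
    _ = M / (M + 1) * ε := by ring
    _ < ε := mul_lt_of_lt_one_left hε ((div_lt_one (by positivity)).2 (lt_add_one _))

end TranslationBounded

end CMeas

section TrigonometricSeries

variable {V : Type*} [NormedAddCommGroup V] [InnerProductSpace ℝ V]

/-- The trigonometric series `∑ a(y) e^{2πi⟪y, t⟫}` with coefficients `a`, summed over all
frequencies `y ∈ V`. -/
def trigSeries (a : V → ℂ) (t : V) : ℂ := ∑' y, a y * 𝐞 ⟪y, t⟫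

theorem isBohrAP_trigSeries {a : V → ℂ} (ha : Summable fun y => ‖a y‖) :
    IsBohrAP (trigSeries a) := by
  let χ (y : V) : AddChar V Circle := 𝐞.compAddMonoidHom (innerₗ V y).toAddMonoidHom
  have hχ (y : V) : Continuous (χ y) :=
    Real.continuous_fourierChar.comp (continuous_const.inner continuous_id)
  exact isBohrAP_tsum_addChar ha hχ

theorem trigSeries_eq_tsum_subtype {a : V → ℂ} {s : Set V} (hs : Function.support a ⊆ s) (t : V) :
    trigSeries a t = ∑' y : s, a y * 𝐞 ⟪(y : V), t⟫ :=
  (tsum_subtype_eq_of_support_subset (f := fun y => a y * (𝐞 ⟪y, t⟫ : ℂ))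
    ((Function.support_mul_subset_left _ _).trans hs)).symm

variable [FiniteDimensional ℝ V] [MeasurableSpace V] [BorelSpace V]

theorem integral_mul_fourierChar_inner_sub (ψ : V → ℂ) (y t : V) :
    ∫ u, ψ u * 𝐞 ⟪y, t - u⟫ = 𝓕 ψ y * 𝐞 ⟪y, t⟫ := by
  rw [Real.fourier_eq, ← integral_mul_const]
  congr 1 with u
  rw [inner_sub_right, sub_eq_neg_add, AddChar.map_add_eq_mul, Circle.coe_mul, Circle.smul_def,
    smul_eq_mul, real_inner_comm]
  ring

theorem integral_mul_trigSeries_sub {a ψ : V → ℂ} (ha : Summable fun y => ‖a y‖)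
    (hψ : Integrable ψ) (t : V) :
    ∫ u, ψ u * trigSeries a (t - u) = trigSeries (fun y => a y * 𝓕 ψ y) t := by
  let s := Function.support a
  have : Countable s := by
    simpa only [s, Function.support, norm_ne_zero_iff] using ha.countable_support.to_subtype
  have hint (y : s) : Integrable fun u => ψ u * (a y * 𝐞 ⟪(y : V), t - u⟫) :=
    hψ.mul_bdd (c := ‖a y‖) (by fun_prop) (Eventually.of_forall fun u => by
      rw [norm_mul, Circle.norm_coe, mul_one])
  have hsum : Summable fun y : s => ∫ u, ‖ψ u * (a y * 𝐞 ⟪(y : V), t - u⟫)‖ := by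
    simp only [norm_mul, Circle.norm_coe, mul_one, integral_mul_const]
    exact (ha.subtype s).mul_left _
  calc ∫ u, ψ u * trigSeries a (t - u)
      = ∫ u, ∑' y : s, ψ u * (a y * 𝐞 ⟪(y : V), t - u⟫) := by
        simp only [trigSeries_eq_tsum_subtype (le_refl s), tsum_mul_left]
    _ = ∑' y : s, ∫ u, ψ u * (a y * 𝐞 ⟪(y : V), t - u⟫) :=
        (integral_tsum_of_summable_integral_norm hint hsum).symm
    _ = ∑' y : s, a y * 𝓕 ψ y * 𝐞 ⟪(y : V), t⟫ := by
        simp only [mul_left_comm (ψ _), integral_const_mul, integral_mul_fourierChar_inner_sub,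
          mul_assoc]
    _ = trigSeries (fun y => a y * 𝓕 ψ y) t :=
        (trigSeries_eq_tsum_subtype (Function.support_mul_subset_left _ _) t).symm

end TrigonometricSeries

section Fourier

variable {V : Type*} [NormedAddCommGroup V] [InnerProductSpace ℝ V]

theorem contDiff_fourierChar_inner {n : WithTop ℕ∞} (t : V) :
    ContDiff ℝ n fun y : V => (𝐞 ⟪y, t⟫ : ℂ) := by
  have hphase : ContDiff ℝ n fun y : V => 2 * Real.pi * ⟪y, t⟫ :=
    contDiff_const.mul (contDiff_id.inner ℝ contDiff_const)
  simp only [Real.fourierChar_apply]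
  exact ((Complex.ofRealCLM.contDiff.comp hphase).mul contDiff_const).cexp

variable [FiniteDimensional ℝ V] [MeasurableSpace V] [BorelSpace V]
  {E : Type*} [NormedAddCommGroup E] [NormedSpace ℂ E]

theorem fourierInv_sub (f : V → E) (t x : V) :
    𝓕⁻ f (t - x) = 𝓕 (fun y => (𝐞 ⟪y, t⟫ : ℂ) • f y) x := by
  rw [Real.fourierInv_eq, Real.fourier_eq]
  congr 1 with y
  rw [inner_sub_right, sub_eq_neg_add, AddChar.map_add_eq_mul, mul_smul, Circle.smul_def (𝐞 ⟪y, t⟫)]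

theorem integral_fourierInv_comp_smul_smul {c : ℝ} (hc : c ≠ 0) (φ : V → ℂ) (h : V → E) :
    ∫ s, 𝓕⁻ (fun y => φ (c • y)) s • h s = ∫ s, 𝓕⁻ φ s • h (c • s) := by
  have hscale (s : V) : 𝓕⁻ (fun y => φ (c • y)) (c • s)
      = |(c ^ Module.finrank ℝ V)⁻¹| • 𝓕⁻ φ s := by
    simp only [Real.fourierInv_eq]
    rw [← Measure.integral_comp_smul]
    simp only [real_inner_smul_left, real_inner_smul_right]
  have hJ : |(c ^ Module.finrank ℝ V)⁻¹| ≠ 0 := by positivity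
  rw [← smul_right_inj hJ, ← Measure.integral_comp_smul, ← integral_smul]
  simp only [hscale, smul_assoc]

variable {f : V → E}

theorem integrable_fourierInv_of_contDiff (hf : ContDiff ℝ (⊤ : ℕ∞) f) (hfc : HasCompactSupport f) :
    Integrable (𝓕⁻ f) := by
  let F : 𝓢(V, E) := hfc.toSchwartzMap hf
  have hF : Integrable (𝓕⁻ (F : V → E)) := by
    rw [← SchwartzMap.fourierInv_coe]
    exact (𝓕⁻ F).integrable
  exact hF

theorem integral_fourierInv_of_contDiff [CompleteSpace E] (hf : ContDiff ℝ (⊤ : ℕ∞) f)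
    (hfc : HasCompactSupport f) : ∫ s, 𝓕⁻ f s = f 0 := by
  let F : 𝓢(V, E) := hfc.toSchwartzMap hf
  have hinv : 𝓕 (𝓕⁻ f) 0 = f 0 :=
    congrFun (F.continuous.fourier_fourierInv_eq F.integrable (𝓕 F).integrable) 0
  simpa [Real.fourier_eq] using hinv

end Fourier

namespace PPM

theorem summable_norm_mass_mul {V : Type*} [PseudoMetricSpace V] {ν : PPM V} {x₀ : V}
    (hν : ∀ r : ℝ, ν.var (ball x₀ r) < ⊤) {b : V → ℂ} (hb : Continuous b)
    (hbc : HasCompactSupport b) : Summable fun y => ‖ν.mass y * b y‖ := by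
  obtain ⟨B, hB⟩ := hbc.exists_bound_of_continuous hb
  obtain ⟨r, hr⟩ := hbc.isCompact.isBounded.subset_ball x₀
  have hball : Summable ((ball x₀ r).indicator fun y => ‖ν.mass y‖) :=
    summable_subtype_iff_indicator.1
      (NNReal.summable_coe.2 (ENNReal.tsum_coe_ne_top_iff_summable.1 (hν r).ne))
  refine (hball.mul_right B).of_nonneg_of_le (fun _ => norm_nonneg _) fun y => ?_
  rw [norm_mul]
  by_cases hy : y ∈ ball x₀ r
  · rw [Set.indicator_of_mem hy]
    exact mul_le_mul_of_nonneg_left (hB y) (norm_nonneg _)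
  · rw [Set.indicator_of_notMem hy, image_eq_zero_of_notMem_tsupport fun h => hy (hr h), norm_zero,
      mul_zero, zero_mul]

end PPM

namespace CMeas

variable {V : Type*} [NormedAddCommGroup V] [InnerProductSpace ℝ V] [FiniteDimensional ℝ V]
  [MeasurableSpace V] [BorelSpace V]

/-- The pure point measure `ν` is the distributional Fourier transform of `μ`. It suffices to test
against compactly supported Schwartz functions, as these are dense. -/
def HasFourierTransform (μ : CMeas V) (ν : PPM V) : Prop :=
  ∀ φ : 𝓢(V, ℂ), HasCompactSupport φ → μ.pair (FourierTransform.fourierCLE ℂ 𝓢(V, ℂ) φ) = ν.pair φ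

variable {μ : CMeas V} {ν : PPM V} {φ ψ : V → ℂ}

theorem HasFourierTransform.conv_fourierInv (hF : μ.HasFourierTransform ν)
    (hφ : ContDiff ℝ (⊤ : ℕ∞) φ) (hφc : HasCompactSupport φ) (t : V) :
    μ.conv (𝓕⁻ φ) t = trigSeries (fun y => ν.mass y * φ y) t := by
  let f : 𝓢(V, ℂ) := (hφc.mul_left (f := fun y => (𝐞 ⟪y, t⟫ : ℂ))).toSchwartzMap
    ((contDiff_fourierChar_inner t).mul hφ)
  calc μ.conv (𝓕⁻ φ) t = μ.pair (𝓕 (f : V → ℂ)) := congrArg μ.pair (funext (fourierInv_sub φ t))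
    _ = ν.pair f := hF f hφc.mul_left
    _ = trigSeries (fun y => ν.mass y * φ y) t := tsum_congr fun y => by
        rw [mul_assoc, mul_comm (φ y)]
        rfl

theorem HasFourierTransform.isBohrAP_integral_fourierInv_mul_conv (hF : μ.HasFourierTransform ν)
    (hμ : μ.IsTranslationBounded) (hν : ∀ r : ℝ, ν.var (ball 0 r) < ⊤)
    (hφ : ContDiff ℝ (⊤ : ℕ∞) φ) (hφc : HasCompactSupport φ)
    (hψ : Continuous ψ) (hψc : HasCompactSupport ψ) :
    IsBohrAP fun t => ∫ s, 𝓕⁻ φ s * μ.conv ψ (t - s) := by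
  have := hμ.isLocallyFiniteMeasure
  obtain ⟨M, hM⟩ := hμ.exists_integral_norm_comp_sub_le_of_hasCompactSupport hψ hψc
  have hsummable := PPM.summable_norm_mass_mul hν hφ.continuous hφc
  have hseries (t : V) : ∫ s, 𝓕⁻ φ s * μ.conv ψ (t - s)
      = trigSeries (fun y => ν.mass y * φ y * 𝓕 ψ y) t := by
    rw [integral_mul_conv_comm μ (μ.integrable_prod_mul_comp_sub
      (integrable_fourierInv_of_contDiff hφ hφc) hψ.measurable
      (hμ.integrable_comp_sub hψ hψc) hM t)]
    simp only [hF.conv_fourierInv hφ hφc]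
    exact integral_mul_trigSeries_sub hsummable (hψ.integrable_of_hasCompactSupport hψc) t
  simp only [hseries]
  refine isBohrAP_trigSeries (.of_nonneg_of_le (fun _ => norm_nonneg _) (fun y => ?_)
    (hsummable.mul_right (∫ u, ‖ψ u‖)))
  rw [norm_mul]
  gcongr
  exact VectorFourier.norm_fourierIntegral_le_integral_norm _ _ _ _ _

theorem HasFourierTransform.isBohrAP_conv (hF : μ.HasFourierTransform ν)
    (hμ : μ.IsTranslationBounded) (hν : ∀ r : ℝ, ν.var (ball 0 r) < ⊤)
    (hψ : Continuous ψ) (hψc : HasCompactSupport ψ) : IsBohrAP (μ.conv ψ) := by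
  obtain ⟨M, hM⟩ := hμ.exists_integral_norm_comp_sub_le_of_hasCompactSupport hψ hψc
  obtain ⟨φ, hφ, hφc, hφ0⟩ :
      ∃ φ : V → ℂ, ContDiff ℝ (⊤ : ℕ∞) φ ∧ HasCompactSupport φ ∧ φ 0 = 1 := by
    obtain ⟨f, -, hfc, hf, -, hf0⟩ :=
      exists_contDiff_tsupport_subset (n := ⊤) (univ_mem : Set.univ ∈ 𝓝 (0 : V))
    exact ⟨fun x => f x, Complex.ofRealCLM.contDiff.comp hf, hfc.comp_left Complex.ofReal_zero,
      congrArg Complex.ofReal hf0⟩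
  have happrox := tendstoUniformly_integral_smul_comp_sub_smul
    (integrable_fourierInv_of_contDiff hφ hφc) (hμ.uniformContinuous_conv hψ hψc)
    (fun t => (μ.norm_conv_le_integral_norm t).trans (hM t))
  simp only [integral_fourierInv_of_contDiff hφ hφc, hφ0, one_smul] at happrox
  have hne : ∃ᶠ c in 𝓝 (0 : ℝ), c ≠ 0 :=
    (eventually_mem_nhdsWithin (s := {0}ᶜ)).frequently.filter_mono nhdsWithin_le_nhds
  refine isBohrAP_of_tendstoUniformly happrox (hne.mono fun c hc => ?_)
  simpa only [← smul_eq_mul, integral_fourierInv_comp_smul_smul hc] using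
    hF.isBohrAP_integral_fourierInv_mul_conv (φ := fun y => φ (c • y)) hμ hν
      (hφ.comp (contDiff_const_smul c)) (hφc.comp_smul hc) hψ hψc

end CMeas

theorem statement13_general {V : Type*} [NormedAddCommGroup V] [InnerProductSpace ℝ V]
    [FiniteDimensional ℝ V] [MeasurableSpace V] [BorelSpace V] {μ : CMeas V} {ν : PPM V}
    (hμ : μ.IsTranslationBounded) (hν : ∀ r : ℝ, ν.var (ball 0 r) < ⊤)
    (hF : μ.HasFourierTransform ν) {ψ : V → ℂ} (hψ : Continuous ψ) (hψc : HasCompactSupport ψ) :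
    (∀ t, Integrable (fun x => ψ (t - x) * μ.den x) μ.var) ∧ IsBohrAP (μ.conv ψ) :=
  ⟨fun t => μ.integrable_mul_den (hμ.integrable_comp_sub hψ hψc t), hF.isBohrAP_conv hμ hν hψ hψc⟩

/-- **Meyer.** Let `μ` be a translation bounded complex measure on `ℝ^d` whose
distributional Fourier transform is a pure point measure. Then `μ` is an almost periodic
measure: for every continuous compactly supported `ψ`, the convolution
`(μ ⋆ ψ)(t) = ∫ ψ(t-x) dμ(x)` is well defined and Bohr almost periodic in `t`. -/
theorem statement13 {d : ℕ} (μ : CMeas (Ed d))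
    (htb : ∃ C : ℝ, ∀ x : Ed d, μ.var (ball x 1) ≤ ENNReal.ofReal C)
    (ν : PPM (Ed d)) (hνloc : ν.locFinite)
    (hF : ∀ φ : SchwartzMap (Ed d) ℂ, HasCompactSupport φ →
      μ.pair ⇑(FourierTransform.fourierCLE ℂ (SchwartzMap (Ed d) ℂ) φ) = ν.pair ⇑φ) :
    ∀ ψ : Ed d → ℂ, Continuous ψ → HasCompactSupport ψ →
      (∀ t : Ed d, Integrable (fun x => ψ (t - x) * μ.den x) μ.var) ∧
      IsBohrAP fun t : Ed d => ∫ x, ψ (t - x) * μ.den x ∂μ.var :=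
  fun _ hψ hψc => statement13_general htb hνloc hF hψ hψc

end
end

section
/- Let μ be a non-negative temperate measure on ℝ^d whose distributional Fourier transform μ̂ is a (complex, locally finite) measure. Then μ is translation bounded: sup_{x∈ℝ^d} μ(B(x,1)) < ∞. -/
/-!
Take a test function `φ` supported near the origin with `𝓕 φ ≥ 0` and `𝓕 φ 0 > 0`, for instance
the self-convolution of an even real bump function. Modulating `φ` by the frequency `x` changes
neither `‖φ‖` nor the support of `φ`, but translates `𝓕 φ` by `x`. Since `μ` is non-negative,
`∫ 𝓕 φ (ξ - x) dμ(ξ)` is therefore at most `∫ ‖φ‖ d|μ̂|`, uniformly in `x`. As `𝓕 φ` is bounded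
below on some ball around `0`, all balls of that radius have uniformly bounded measure, and a ball
of any larger radius is covered by a fixed number of them.
-/

open MeasureTheory Metric Filter Topology Complex SchwartzMap
open scoped RealInnerProductSpace ENNReal

noncomputable section

variable {d : ℕ}

section MeasureBounds

open scoped ComplexOrder

lemma enorm_integral_eq_lintegral_enorm_of_nonneg {α 𝕜 : Type*} [MeasurableSpace α] [RCLike 𝕜]
    {μ : Measure α} {f : α → 𝕜} (hf : Integrable f μ) (hf_nonneg : 0 ≤ᵐ[μ] f) :
    ‖∫ a, f a ∂μ‖ₑ = ∫⁻ a, ‖f a‖ₑ ∂μ := by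
  have f_eq_norm : f =ᵐ[μ] fun a ↦ ((‖f a‖ : ℝ) : 𝕜) := by
    filter_upwards [hf_nonneg] with a ha using (RCLike.norm_of_nonneg' ha).symm
  calc ‖∫ a, f a ∂μ‖ₑ
      = ‖((∫ a, ‖f a‖ ∂μ : ℝ) : 𝕜)‖ₑ := by rw [integral_congr_ae f_eq_norm, integral_ofReal]
    _ = ENNReal.ofReal (∫ a, ‖f a‖ ∂μ) := by
      rw [← ofReal_norm, RCLike.norm_of_nonneg (integral_nonneg fun _ ↦ norm_nonneg _)]
    _ = ∫⁻ a, ‖f a‖ₑ ∂μ := ofReal_integral_norm_eq_lintegral_enorm hf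

variable {G : Type*} [SeminormedAddCommGroup G] [MeasurableSpace G] {μ : Measure G}

lemma measure_ball_le_lintegral_sub_div [BorelSpace G] {f : G → ℝ≥0∞} (hf : Measurable f)
    {c : ℝ≥0∞} (hc : c ≠ 0) (hc' : c ≠ ∞) {δ : ℝ} (hcf : ∀ y ∈ ball 0 δ, c ≤ f y) (x : G) :
    μ (ball x δ) ≤ (∫⁻ y, f (y - x) ∂μ) / c := by
  have ball_subset : ball x δ ⊆ {y | c ≤ f (y - x)} := fun y hy ↦
    hcf _ (mem_ball_zero_iff.2 (mem_ball_iff_norm.1 hy))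
  have measurable_shift : Measurable fun y ↦ f (y - x) :=
    hf.comp (continuous_id.sub continuous_const).measurable
  exact (measure_mono ball_subset).trans
    (meas_ge_le_lintegral_div measurable_shift.aemeasurable hc hc')

lemma iSup_measure_ball_lt_top_of_radius [ProperSpace G] {δ : ℝ} (hδ : 0 < δ)
    (hμ : ⨆ x, μ (ball x δ) < ∞) (R : ℝ) : ⨆ x, μ (ball x R) < ∞ := by
  obtain ⟨t, -, ht, ball_cover⟩ := finite_cover_balls_of_compact (isCompact_closedBall (0 : G) R) hδ
  lift t to Finset G using ht
  have translated_cover (x : G) : ball x R ⊆ ⋃ y ∈ t, ball (y + x) δ := fun z hz ↦ by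
    have hzx : z - x ∈ closedBall 0 R :=
      ball_subset_closedBall (mem_ball_zero_iff.2 (mem_ball_iff_norm.1 hz))
    simpa [mem_ball_iff_norm, sub_sub, add_comm] using ball_cover hzx
  calc ⨆ x, μ (ball x R)
      ≤ ∑ _y ∈ t, ⨆ x, μ (ball x δ) := iSup_le fun x ↦
        (measure_mono (translated_cover x)).trans <| (measure_biUnion_finset_le t _).trans <|
          Finset.sum_le_sum fun y _ ↦ le_iSup (fun x ↦ μ (ball x δ)) (y + x)
    _ < ∞ := ENNReal.sum_lt_top.2 fun _ _ ↦ hμ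

end MeasureBounds

namespace CMeas

variable {V : Type*} [MeasurableSpace V] {ν : CMeas V}

lemma enorm_pair_le (ν : CMeas V) (f : V → ℂ) : ‖ν.pair f‖ₑ ≤ ∫⁻ x, ‖f x‖ₑ ∂ν.var := by
  have enorm_mul_den (x : V) : ‖f x * ν.den x‖ₑ = ‖f x‖ₑ := by
    rw [enorm_mul, ← ofReal_norm (ν.den x), ν.norm_den, ENNReal.ofReal_one, mul_one]
  exact (enorm_integral_le_lintegral_enorm _).trans_eq (lintegral_congr enorm_mul_den)

lemma locFinite.isFiniteMeasureOnCompacts [TopologicalSpace V] (hν : ν.locFinite) :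
    IsFiniteMeasureOnCompacts ν.var :=
  ⟨fun K hK ↦ hν K hK⟩

lemma locFinite.lintegral_enorm_lt_top [TopologicalSpace V] [OpensMeasurableSpace V]
    (hν : ν.locFinite) {F : Type*} [NormedAddCommGroup F] {f : V → F}
    (hf : Continuous f) (hf_supp : HasCompactSupport f) : ∫⁻ x, ‖f x‖ₑ ∂ν.var < ∞ :=
  have := hν.isFiniteMeasureOnCompacts
  (hf.integrable_of_hasCompactSupport hf_supp).hasFiniteIntegral

end CMeas

section Fourier

open scoped FourierTransform Pointwise
open scoped ComplexOrder ComplexConjugate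

lemma iteratedDeriv_fourierChar (n : ℕ) :
    iteratedDeriv n (fun s : ℝ ↦ (𝐞 s : ℂ)) = fun s ↦ (2 * Real.pi * I) ^ n * 𝐞 s := by
  induction n with
  | zero => simp
  | succ n ih =>
    ext s
    rw [iteratedDeriv_succ, ih, deriv_const_mul _ Real.differentiable_fourierChar.differentiableAt,
      Real.deriv_fourierChar]
    ring

lemma contDiff_fourierChar {n : WithTop ℕ∞} : ContDiff ℝ n fun s : ℝ ↦ (𝐞 s : ℂ) := by
  simp only [Real.fourierChar_apply]
  exact ((ofRealCLM.contDiff.comp (contDiff_const.mul contDiff_id)).mul contDiff_const).cexp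

lemma hasTemperateGrowth_fourierChar : (fun s : ℝ ↦ (𝐞 s : ℂ)).HasTemperateGrowth := by
  refine ⟨contDiff_fourierChar, fun n ↦ ⟨0, (2 * Real.pi) ^ n, fun s ↦ le_of_eq ?_⟩⟩
  rw [norm_iteratedFDeriv_eq_norm_iteratedDeriv, iteratedDeriv_fourierChar]
  simp [abs_of_pos Real.pi_pos, Circle.norm_coe]

variable {E : Type*} [NormedAddCommGroup E] [InnerProductSpace ℝ E]

lemma hasTemperateGrowth_fourierChar_inner (x : E) :
    (fun t : E ↦ (𝐞 ⟪t, x⟫ : ℂ)).HasTemperateGrowth :=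
  hasTemperateGrowth_fourierChar.comp (Function.hasTemperateGrowth_inner_left x)

section Modulation

variable {F : Type*} [NormedAddCommGroup F] [NormedSpace ℂ F]

/-- Modulation of a Schwartz function `φ` by the frequency `x`: the function
`t ↦ exp (2πi ⟪t, x⟫) • φ t`, whose Fourier transform is that of `φ` translated by `x`. -/
def modulate (x : E) (φ : 𝓢(E, F)) : 𝓢(E, F) :=
  smulLeftCLM F (fun t : E ↦ (𝐞 ⟪t, x⟫ : ℂ)) φ

lemma modulate_apply (x : E) (φ : 𝓢(E, F)) (t : E) :
    modulate x φ t = 𝐞 ⟪t, x⟫ • φ t :=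
  smulLeftCLM_apply_apply (hasTemperateGrowth_fourierChar_inner x) φ t

lemma enorm_modulate_apply (x : E) (φ : 𝓢(E, F)) (t : E) : ‖modulate x φ t‖ₑ = ‖φ t‖ₑ := by
  rw [modulate_apply, ← ofReal_norm, Circle.norm_smul, ofReal_norm]

lemma tsupport_modulate_subset (x : E) (φ : 𝓢(E, F)) :
    tsupport (modulate x φ) ⊆ tsupport φ :=
  (tsupport_smulLeftCLM_subset _ φ).trans Set.inter_subset_left

lemma fourier_modulate_apply [FiniteDimensional ℝ E] [MeasurableSpace E] [BorelSpace E]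
    (x : E) (φ : 𝓢(E, F)) (ξ : E) : 𝓕 (modulate x φ) ξ = 𝓕 φ (ξ - x) := by
  have phase_eq (t : E) : -⟪t, ξ⟫ + ⟪t, x⟫ = -⟪t, ξ - x⟫ := by rw [inner_sub_right]; ring
  simp only [fourier_coe, Real.fourier_eq, modulate_apply, smul_smul, ← AddChar.map_add_eq_mul,
    phase_eq]

end Modulation

variable [FiniteDimensional ℝ E] [MeasurableSpace E] [BorelSpace E]

lemma conj_fourier_eq_self_of_hermitian {f : E → ℂ} (hf : ∀ t, f (-t) = conj (f t)) (ξ : E) :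
    conj (𝓕 f ξ) = 𝓕 f ξ := by
  simp only [Real.fourier_eq, ← integral_conj]
  rw [← integral_neg_eq_self]
  simp [Circle.smul_def, hf, AddChar.map_neg_eq_inv]

lemma fourier_convolution_mul_apply (φ ψ : 𝓢(E, ℂ)) (ξ : E) :
    𝓕 (SchwartzMap.convolution (.mul ℂ ℂ) φ ψ) ξ = 𝓕 φ ξ * 𝓕 ψ ξ := by
  simp [fourier_convolution]

lemma fourier_convolution_self_nonneg {ψ : 𝓢(E, ℂ)} (hψ : ∀ t, ψ (-t) = conj (ψ t)) (ξ : E) :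
    0 ≤ 𝓕 (SchwartzMap.convolution (.mul ℂ ℂ) ψ ψ) ξ := by
  have fourier_real : conj (𝓕 ψ ξ) = 𝓕 ψ ξ := conj_fourier_eq_self_of_hermitian hψ ξ
  calc 0 ≤ conj (𝓕 ψ ξ) * 𝓕 ψ ξ := star_mul_self_nonneg _
    _ = _ := by rw [fourier_real, fourier_convolution_mul_apply]

lemma tsupport_convolution_subset_closedBall {F₁ F₂ F₃ : Type*}
    [NormedAddCommGroup F₁] [NormedSpace ℂ F₁] [CompleteSpace F₁]
    [NormedAddCommGroup F₂] [NormedSpace ℂ F₂] [CompleteSpace F₂]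
    [NormedAddCommGroup F₃] [NormedSpace ℂ F₃] [CompleteSpace F₃]
    (B : F₁ →L[ℂ] F₂ →L[ℂ] F₃) {φ : 𝓢(E, F₁)} {ψ : 𝓢(E, F₂)} {r s : ℝ}
    (hφ : Function.support φ ⊆ ball 0 r) (hψ : Function.support ψ ⊆ ball 0 s) :
    tsupport (SchwartzMap.convolution B φ ψ) ⊆ closedBall 0 (r + s) := by
  refine closure_minimal ?_ isClosed_closedBall
  calc Function.support (SchwartzMap.convolution B φ ψ)
      ⊆ Function.support φ + Function.support ψ := by
        rw [funext (SchwartzMap.convolution_apply B φ ψ)]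
        exact support_convolution_subset _
    _ ⊆ closedBall 0 (r + s) := by
        rintro _ ⟨t, ht, u, hu, rfl⟩
        rw [mem_closedBall_zero_iff]
        exact norm_add_le_of_le (mem_ball_zero_iff.1 (hφ ht)).le (mem_ball_zero_iff.1 (hψ hu)).le

lemma exists_hermitian_support_subset_ball_fourier_zero_ne_zero {r : ℝ} (hr : 0 < r) :
    ∃ ψ : 𝓢(E, ℂ), (∀ t, ψ (-t) = conj (ψ t)) ∧ Function.support ψ ⊆ ball 0 r ∧
      𝓕 ψ 0 ≠ 0 := by
  let b : ContDiffBump (0 : E) := ⟨r / 2, r, half_pos hr, half_lt_self hr⟩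
  have b_supp : HasCompactSupport fun t ↦ (b t : ℂ) := b.hasCompactSupport.comp_left ofReal_zero
  let ψ : 𝓢(E, ℂ) := b_supp.toSchwartzMap (ofRealCLM.contDiff.comp b.contDiff)
  have ψ_apply (t : E) : ψ t = b t := rfl
  have fourier_ψ_zero : 𝓕 ψ 0 = ((∫ t, b t : ℝ) : ℂ) := by
    rw [← integral_complex_ofReal]
    simp [fourier_coe, Real.fourier_eq, ψ_apply]
  refine ⟨ψ, fun t ↦ by simp [ψ_apply, b.neg], fun t ht ↦ ?_, ?_⟩
  · rw [← b.support_eq]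
    exact ofReal_ne_zero.1 ht
  · rw [fourier_ψ_zero]
    exact ofReal_ne_zero.2 b.integral_pos.ne'

lemma exists_tsupport_subset_fourier_nonneg {U : Set E} (hU : U ∈ 𝓝 0) :
    ∃ φ : 𝓢(E, ℂ), HasCompactSupport φ ∧ tsupport φ ⊆ U ∧ (∀ ξ, 0 ≤ 𝓕 φ ξ) ∧ 𝓕 φ 0 ≠ 0 := by
  obtain ⟨r, hr, closedBall_subset⟩ := nhds_basis_closedBall.mem_iff.1 hU
  obtain ⟨ψ, ψ_hermitian, ψ_supp, fourier_ψ_zero⟩ :=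
    exists_hermitian_support_subset_ball_fourier_zero_ne_zero (E := E) (half_pos hr)
  have φ_tsupp := tsupport_convolution_subset_closedBall (.mul ℂ ℂ) ψ_supp ψ_supp
  rw [add_halves] at φ_tsupp
  refine ⟨SchwartzMap.convolution (.mul ℂ ℂ) ψ ψ,
    (isCompact_closedBall 0 r).of_isClosed_subset (isClosed_tsupport _) φ_tsupp,
    φ_tsupp.trans closedBall_subset, fourier_convolution_self_nonneg ψ_hermitian, ?_⟩
  rw [fourier_convolution_mul_apply]
  exact mul_ne_zero fourier_ψ_zero fourier_ψ_zero

lemma lintegral_enorm_fourier_sub_le {μ : Measure E} {ν : CMeas E} {φ : 𝓢(E, ℂ)} {x : E}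
    (hμ : Integrable (fun ξ ↦ 𝓕 (modulate x φ) ξ) μ) (hφ : ∀ ξ, 0 ≤ 𝓕 φ ξ)
    (hF : ∫ ξ, 𝓕 (modulate x φ) ξ ∂μ = ν.pair (modulate x φ)) :
    ∫⁻ ξ, ‖𝓕 φ (ξ - x)‖ₑ ∂μ ≤ ∫⁻ t, ‖φ t‖ₑ ∂ν.var := by
  have fourier_nonneg : 0 ≤ᵐ[μ] fun ξ ↦ 𝓕 (modulate x φ) ξ := .of_forall fun ξ ↦
    (hφ (ξ - x)).trans_eq (fourier_modulate_apply x φ ξ).symm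
  calc ∫⁻ ξ, ‖𝓕 φ (ξ - x)‖ₑ ∂μ
      = ‖∫ ξ, 𝓕 (modulate x φ) ξ ∂μ‖ₑ := by
        rw [enorm_integral_eq_lintegral_enorm_of_nonneg hμ fourier_nonneg]
        simp only [fourier_modulate_apply]
    _ ≤ ∫⁻ t, ‖modulate x φ t‖ₑ ∂ν.var := hF ▸ ν.enorm_pair_le _
    _ = ∫⁻ t, ‖φ t‖ₑ ∂ν.var := by simp only [enorm_modulate_apply]

theorem statement14_general {μ : Measure E} (hμ : ∀ φ : 𝓢(E, ℂ), Integrable φ μ)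
    {ν : CMeas E} (hν : ν.locFinite) {U : Set E} (hU : U ∈ 𝓝 0)
    (hF : ∀ φ : 𝓢(E, ℂ), HasCompactSupport φ → tsupport φ ⊆ U →
      ∫ ξ, 𝓕 φ ξ ∂μ = ν.pair φ) (R : ℝ) :
    ⨆ x, μ (ball x R) < ∞ := by
  obtain ⟨φ, φ_supp, φ_supp_subset, φ_nonneg, φ_zero⟩ := exists_tsupport_subset_fourier_nonneg hU
  have integral_translate_le (x : E) := lintegral_enorm_fourier_sub_le (hμ _) φ_nonneg <|
    hF (modulate x φ) (φ_supp.mono' ((subset_tsupport _).trans (tsupport_modulate_subset x φ)))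
      ((tsupport_modulate_subset x φ).trans φ_supp_subset)
  set c : ℝ≥0∞ := ‖𝓕 φ 0‖ₑ / 2
  have hc : c ≠ 0 := by simpa [c] using φ_zero
  obtain ⟨δ, hδ, c_le⟩ : ∃ δ > 0, ∀ ξ ∈ ball 0 δ, c ≤ ‖𝓕 φ ξ‖ₑ :=
    Metric.eventually_nhds_iff_ball.1 <| ((𝓕 φ).continuous.enorm.tendsto 0).eventually_const_le <|
      ENNReal.half_lt_self (enorm_ne_zero.2 φ_zero) enorm_ne_top
  refine iSup_measure_ball_lt_top_of_radius hδ (lt_of_le_of_lt (iSup_le fun x ↦ ?_) <|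
    ENNReal.div_lt_top (hν.lintegral_enorm_lt_top φ.continuous φ_supp).ne hc) R
  exact (measure_ball_le_lintegral_sub_div (𝓕 φ).continuous.enorm.measurable hc
    (ENNReal.div_ne_top enorm_ne_top two_ne_zero) c_le x).trans <|
      ENNReal.div_le_div_right (integral_translate_le x) c

end Fourier

/-- Let `μ` be a non-negative temperate measure on `ℝ^d` whose
distributional Fourier transform is a (complex, locally finite) measure. Then `μ` is
translation bounded: `sup_x μ(B(x,1)) < ∞`. -/
theorem statement14 {d : ℕ} (μ : Measure (Ed d))
    (hμt : ∀ φ : SchwartzMap (Ed d) ℂ, Integrable (fun x => φ x) μ)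
    (ν : CMeas (Ed d)) (hνloc : ν.locFinite)
    (hF : ∀ φ : SchwartzMap (Ed d) ℂ, HasCompactSupport φ →
      (∫ x, (FourierTransform.fourierCLE ℂ (SchwartzMap (Ed d) ℂ) φ) x ∂μ) = ν.pair ⇑φ) :
    ∃ C : ℝ, ∀ x : Ed d, μ (ball x 1) ≤ ENNReal.ofReal C := by
  have h := statement14_general hμt hνloc univ_mem (fun φ hφ _ ↦ hF φ hφ) 1
  exact ⟨(⨆ x, μ (ball x 1)).toReal, fun x ↦
    (le_iSup (fun x ↦ μ (ball x 1)) x).trans_eq (ENNReal.ofReal_toReal h.ne).symm⟩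

end
end
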